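/- For any θ₀ = (γ₀, μ₀, σ₀) ∈ (−1/2, ∞) × ℝ × (0, ∞), there exist a measurable function ℓ̇ : ℝ → [0, ∞) with ∫ ℓ̇² dP_{θ₀} < ∞ and ε₀ > 0 such that for every 0 < ε < ε₀: |ℓ_{θ₁}(x) − ℓ_{θ₂}(x)| ≤ ℓ̇(x) ‖θ₁ − θ₂‖ for all x ∈ S̄(2ε) and all θ₁, θ₂ ∈ (−1/2, ∞) × ℝ × (0, ∞) with ‖θ_j − θ₀‖ < ε (j = 1, 2), where S̄(δ) = ⋂_{θ: ‖θ−θ₀‖<δ} S_θ. -/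

import Mathlib

open MeasureTheory Filter Set

/-- `u_γ(z)` for the GEV family. -/
noncomputable def gevU (γ z : ℝ) : ℝ :=
  if γ = 0 then Real.exp (-z) else (1 + γ * z) ^ (-γ⁻¹)

/-- Lebesgue density of the GEV distribution with parameter `θ = (γ, μ, σ)`. -/
noncomputable def gevDensity (θ : ℝ × ℝ × ℝ) (x : ℝ) : ℝ :=
  if 0 < θ.2.2 + θ.1 * (x - θ.2.1) then
    (θ.2.2)⁻¹ * Real.exp (-(gevU θ.1 ((x - θ.2.1) / θ.2.2))) *
      gevU θ.1 ((x - θ.2.1) / θ.2.2) ^ (θ.1 + 1)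
  else 0

/-- The GEV probability measure with parameter `θ`. -/
noncomputable def gevMeasure (θ : ℝ × ℝ × ℝ) : Measure ℝ :=
  MeasureTheory.volume.withDensity fun x => ENNReal.ofReal (gevDensity θ x)

/-- Log-density of the GEV family (valid on the support `{x | 0 < σ + γ (x − μ)}`):
`ℓ_θ(x) = −log σ − u + (γ + 1) log u`. -/
noncomputable def gevLogDensity (θ : ℝ × ℝ × ℝ) (x : ℝ) : ℝ :=
  -Real.log θ.2.2 - gevU θ.1 ((x - θ.2.1) / θ.2.2)
    + (θ.1 + 1) * Real.log (gevU θ.1 ((x - θ.2.1) / θ.2.2))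

/-!
Write `w = σ + γ (x - μ)`. Since `-γ log u = log w - log σ`, one has
`-log u = (x - μ) * ∫₀¹ ds / ((1 - s) σ + s w)` for every shape `γ`, including `γ = 0`. If `x` is in
the support of every parameter within `2ε` of `θ₀`, then within `ε` of `θ₀` both `σ` and `w` stay
above a quarter of their values at `θ₀`, so differences of `log u` can be estimated under the
integral sign. With `u₀` the value of `u` at `θ₀`, this yields a Lipschitz constant for `ℓ_θ(x)` of
order `max(1, u₀)^4 (1 + |log u₀|)^2 (1 + u₀^γ₀)`. Under `P_{θ₀}` the variable `u₀` is standard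
exponential, so the square of this bound is integrable exactly because `2 γ₀ > -1`.
-/

/-- The reciprocal of the logarithmic mean of `a` and `b`, i.e. `(log b - log a) / (b - a)`. The
integral form needs no case split at `a = b`, so with `a = σ` and `b = σ + γ (x - μ)` it treats all
shapes `γ`, including `γ = 0`, at once. -/
noncomputable def invLogMean (a b : ℝ) : ℝ := ∫ s in (0 : ℝ)..1, ((1 - s) * a + s * b)⁻¹

section InvLogMean

variable {a b a' b' c s : ℝ}

lemma le_segment (ha : c ≤ a) (hb : c ≤ b) (hs : s ∈ Icc (0 : ℝ) 1) :
    c ≤ (1 - s) * a + s * b :=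
  (le_min ha hb).trans (Convex.min_le_combo a b (sub_nonneg.2 hs.2) hs.1 (sub_add_cancel 1 s))

lemma segment_pos (ha : 0 < a) (hb : 0 < b) (hs : s ∈ Icc (0 : ℝ) 1) :
    0 < (1 - s) * a + s * b :=
  (lt_min ha hb).trans_le (le_segment (min_le_left a b) (min_le_right a b) hs)

lemma segment_mono (ha : a ≤ a') (hb : b ≤ b') (hs : s ∈ Icc (0 : ℝ) 1) :
    (1 - s) * a + s * b ≤ (1 - s) * a' + s * b' :=
  add_le_add (mul_le_mul_of_nonneg_left ha (sub_nonneg.2 hs.2)) (mul_le_mul_of_nonneg_left hb hs.1)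

lemma inv_segment_le_inv_add_inv (ha : 0 < a) (hb : 0 < b) (hs : s ∈ Icc (0 : ℝ) 1) :
    ((1 - s) * a + s * b)⁻¹ ≤ a⁻¹ + b⁻¹ := by
  rw [inv_le_comm₀ (segment_pos ha hb hs) (by positivity)]
  refine le_segment ?_ ?_ hs
  · exact inv_le_of_inv_le₀ ha (by linarith [inv_pos.2 hb])
  · exact inv_le_of_inv_le₀ hb (by linarith [inv_pos.2 ha])

lemma mul_inv_segment_le_inv (ha : 0 < a) (hb : 0 < b) (hs : s ∈ Icc (0 : ℝ) 1) :
    s * ((1 - s) * a + s * b)⁻¹ ≤ b⁻¹ := by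
  rw [← div_eq_mul_inv, div_le_iff₀ (segment_pos ha hb hs), inv_mul_eq_div, le_div_iff₀ hb]
  linarith [mul_nonneg (sub_nonneg.2 hs.2) ha.le]

lemma intervalIntegrable_inv_segment (ha : 0 < a) (hb : 0 < b) :
    IntervalIntegrable (fun s : ℝ => ((1 - s) * a + s * b)⁻¹) volume 0 1 := by
  refine ContinuousOn.intervalIntegrable (ContinuousOn.inv₀ (by fun_prop) fun s hs => ?_)
  rw [uIcc_of_le zero_le_one] at hs
  exact (segment_pos ha hb hs).ne'

lemma invLogMean_self (a : ℝ) : invLogMean a a = a⁻¹ := by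
  simp [invLogMean, sub_mul]

lemma invLogMean_mul_mul (c a b : ℝ) : invLogMean (c * a) (c * b) = c⁻¹ * invLogMean a b := by
  rw [invLogMean, invLogMean, ← intervalIntegral.integral_const_mul]
  refine intervalIntegral.integral_congr fun s _ => ?_
  rw [← mul_inv]
  congr 1
  ring

lemma invLogMean_anti (ha : 0 < a) (hb : 0 < b) (haa' : a ≤ a') (hbb' : b ≤ b') :
    invLogMean a' b' ≤ invLogMean a b :=
  intervalIntegral.integral_mono_on zero_le_one
    (intervalIntegrable_inv_segment (ha.trans_le haa') (hb.trans_le hbb'))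
    (intervalIntegrable_inv_segment ha hb)
    fun _ hs => inv_anti₀ (segment_pos ha hb hs) (segment_mono haa' hbb' hs)

lemma invLogMean_le_inv (hc : 0 < c) (ha : c ≤ a) (hb : c ≤ b) : invLogMean a b ≤ c⁻¹ :=
  (invLogMean_anti hc hc ha hb).trans_eq (invLogMean_self c)

lemma inv_le_invLogMean (ha : 0 < a) (hb : 0 < b) (hac : a ≤ c) (hbc : b ≤ c) :
    c⁻¹ ≤ invLogMean a b :=
  (invLogMean_self c).symm.trans_le (invLogMean_anti ha hb hac hbc)

lemma invLogMean_pos (ha : 0 < a) (hb : 0 < b) : 0 < invLogMean a b :=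
  (inv_pos.2 (lt_max_of_lt_left ha)).trans_le
    (inv_le_invLogMean ha hb (le_max_left a b) (le_max_right a b))

lemma sub_mul_invLogMean (ha : 0 < a) (hb : 0 < b) :
    (b - a) * invLogMean a b = Real.log b - Real.log a := by
  have hderiv : ∀ s ∈ uIcc (0 : ℝ) 1, HasDerivAt (fun s => Real.log ((1 - s) * a + s * b))
      ((b - a) * ((1 - s) * a + s * b)⁻¹) s := by
    intro s hs
    rw [uIcc_of_le zero_le_one] at hs
    have hsegment : HasDerivAt (fun s : ℝ => (1 - s) * a + s * b) (b - a) s :=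
      ((((hasDerivAt_id s).const_sub 1).mul_const a).add
        ((hasDerivAt_id s).mul_const b)).congr_deriv (by ring)
    simpa only [div_eq_mul_inv] using hsegment.log (segment_pos ha hb hs).ne'
  rw [invLogMean, ← intervalIntegral.integral_const_mul,
    intervalIntegral.integral_eq_sub_of_hasDerivAt hderiv
      ((intervalIntegrable_inv_segment ha hb).const_mul _)]
  simp

lemma abs_log_sub_log (ha : 0 < a) (hb : 0 < b) :
    |Real.log b - Real.log a| = |b - a| * invLogMean a b := by
  rw [← sub_mul_invLogMean ha hb, abs_mul, abs_of_pos (invLogMean_pos ha hb)]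

lemma abs_log_sub_log_le (hc : 0 < c) (ha : c ≤ a) (hb : c ≤ b) :
    |Real.log b - Real.log a| ≤ c⁻¹ * |b - a| := by
  rw [abs_log_sub_log (hc.trans_le ha) (hc.trans_le hb), mul_comm]
  gcongr
  exact invLogMean_le_inv hc ha hb

lemma abs_sub_le_mul_abs_log_sub_log (ha : 0 < a) (hb : 0 < b) (hac : a ≤ c) (hbc : b ≤ c) :
    |b - a| ≤ c * |Real.log b - Real.log a| := by
  have hc : 0 < c := ha.trans_le hac
  calc |b - a| = c * (|b - a| * c⁻¹) := by field_simp
    _ ≤ c * (|b - a| * invLogMean a b) := by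
      gcongr
      exact inv_le_invLogMean ha hb hac hbc
    _ = c * |Real.log b - Real.log a| := by rw [abs_log_sub_log ha hb]

end InvLogMean

lemma abs_div_sub_div_le {c p p₁ p₂ y₁ y₂ : ℝ} (hp : 0 < p) (hc : 0 < c) (h₁ : p ≤ c * p₁)
    (h₂ : p ≤ c * p₂) :
    |y₁ / p₁ - y₂ / p₂| ≤ c * |y₁ - y₂| / p + c ^ 2 * (|y₂| * |p₁ - p₂|) / p ^ 2 := by
  have hp₁ : 0 < p₁ := pos_of_mul_pos_right (hp.trans_le h₁) hc.le
  have hp₂ : 0 < p₂ := pos_of_mul_pos_right (hp.trans_le h₂) hc.le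
  have hinv {q : ℝ} (hq : 0 < q) (h : p ≤ c * q) : q⁻¹ ≤ c / p := by
    rw [inv_eq_one_div, div_le_div_iff₀ hq hp]
    linarith
  have hsplit : y₁ / p₁ - y₂ / p₂ = (y₁ - y₂) * p₁⁻¹ - y₂ * (p₁ - p₂) * (p₁⁻¹ * p₂⁻¹) := by
    field_simp
    ring
  calc |y₁ / p₁ - y₂ / p₂|
      ≤ |y₁ - y₂| * p₁⁻¹ + |y₂| * |p₁ - p₂| * (p₁⁻¹ * p₂⁻¹) := by
        rw [hsplit]
        refine (abs_sub _ _).trans_eq ?_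
        simp only [abs_mul, abs_inv, abs_of_pos hp₁, abs_of_pos hp₂]
    _ ≤ |y₁ - y₂| * (c / p) + |y₂| * |p₁ - p₂| * (c / p * (c / p)) := by
        gcongr
        exacts [hinv hp₁ h₁, hinv hp₁ h₁, hinv hp₂ h₂]
    _ = c * |y₁ - y₂| / p + c ^ 2 * (|y₂| * |p₁ - p₂|) / p ^ 2 := by
        field_simp

section GevU

variable {γ y z σ : ℝ}

lemma gevU_pos (hz : 0 < 1 + γ * z) : 0 < gevU γ z := by
  unfold gevU
  split_ifs <;> positivity

lemma gevU_rpow_neg (hz : 0 < 1 + γ * z) : gevU γ z ^ (-γ) = 1 + γ * z := by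
  rcases eq_or_ne γ 0 with rfl | hγ
  · simp
  · rw [gevU, if_neg hγ, ← Real.rpow_mul hz.le, neg_mul_neg, inv_mul_cancel₀ hγ, Real.rpow_one]

lemma measurable_gevU (γ : ℝ) : Measurable (gevU γ) := by
  unfold gevU
  split_ifs <;> fun_prop

lemma hasDerivAt_gevU (hz : 0 < 1 + γ * z) :
    HasDerivAt (gevU γ) (-gevU γ z ^ (γ + 1)) z := by
  rcases eq_or_ne γ 0 with rfl | hγ
  · have hexp : gevU 0 = fun z => Real.exp (-z) := by
      funext z
      simp [gevU]
    simpa [hexp] using (hasDerivAt_neg z).exp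
  · have hpow : gevU γ = fun z => (1 + γ * z) ^ (-γ⁻¹) := by
      funext z
      simp [gevU, hγ]
    have hbase : HasDerivAt (fun z => 1 + γ * z) γ z := by
      simpa using ((hasDerivAt_id z).const_mul γ).const_add 1
    have hexponent : -γ⁻¹ * (γ + 1) = -γ⁻¹ - 1 := by
      field_simp
      ring
    rw [hpow]
    convert hbase.rpow_const (p := -γ⁻¹) (Or.inl hz.ne') using 1
    rw [← Real.rpow_mul hz.le, hexponent, mul_neg, mul_inv_cancel₀ hγ, neg_one_mul]

lemma injOn_gevU (γ : ℝ) : InjOn (gevU γ) {z | 0 < 1 + γ * z} := by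
  intro z hz z' hz' h
  rcases eq_or_ne γ 0 with rfl | hγ
  · simpa [gevU] using h
  · have hbase : 1 + γ * z = 1 + γ * z' := by rw [← gevU_rpow_neg hz, h, gevU_rpow_neg hz']
    exact mul_left_cancel₀ hγ (add_left_cancel hbase)

lemma surjOn_gevU (γ : ℝ) : SurjOn (gevU γ) {z | 0 < 1 + γ * z} (Ioi 0) := by
  intro u hu
  rw [mem_Ioi] at hu
  rcases eq_or_ne γ 0 with rfl | hγ
  · exact ⟨-Real.log u, by simp, by simp [gevU, Real.exp_log hu]⟩
  · have hbase : 1 + γ * ((u ^ (-γ) - 1) / γ) = u ^ (-γ) := by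
      field_simp
      ring
    refine ⟨(u ^ (-γ) - 1) / γ, ?_, ?_⟩
    · rw [mem_ofPred_eq, hbase]
      positivity
    · rw [gevU, if_neg hγ, hbase, ← Real.rpow_mul hu.le, neg_mul_neg, mul_inv_cancel₀ hγ,
        Real.rpow_one]

lemma one_add_mul_div (hσ : 0 < σ) : 1 + γ * (y / σ) = (σ + γ * y) / σ := by
  field_simp

lemma log_gevU_div (hσ : 0 < σ) (hw : 0 < σ + γ * y) :
    Real.log (gevU γ (y / σ)) = -(y * invLogMean σ (σ + γ * y)) := by
  rcases eq_or_ne γ 0 with rfl | hγ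
  · simp [gevU, invLogMean_self, div_eq_mul_inv]
  · have hlog : γ * y * invLogMean σ (σ + γ * y) = Real.log (σ + γ * y) - Real.log σ := by
      simpa using sub_mul_invLogMean hσ hw
    rw [gevU, if_neg hγ, one_add_mul_div hσ, Real.log_rpow (div_pos hw hσ),
      Real.log_div hw.ne' hσ.ne', ← hlog]
    field_simp

end GevU

/-- The affine function `σ + γ (x - μ)`, which is positive exactly on the support `S_θ`. -/
def gevMargin (θ : ℝ × ℝ × ℝ) (x : ℝ) : ℝ := θ.2.2 + θ.1 * (x - θ.2.1)

/-- The transform `x ↦ u_γ((x - μ) / σ)`, which turns `P_θ` into the standard exponential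
distribution. -/
noncomputable def gevTransform (θ : ℝ × ℝ × ℝ) (x : ℝ) : ℝ := gevU θ.1 ((x - θ.2.1) / θ.2.2)

section Transform

variable {θ : ℝ × ℝ × ℝ} {x : ℝ}

lemma one_add_shape_mul_pos (hσ : 0 < θ.2.2) (hw : 0 < gevMargin θ x) :
    0 < 1 + θ.1 * ((x - θ.2.1) / θ.2.2) :=
  (div_pos hw hσ).trans_eq (one_add_mul_div hσ).symm

lemma gevTransform_pos (hσ : 0 < θ.2.2) (hw : 0 < gevMargin θ x) : 0 < gevTransform θ x :=
  gevU_pos (one_add_shape_mul_pos hσ hw)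

lemma log_gevTransform (hσ : 0 < θ.2.2) (hw : 0 < gevMargin θ x) :
    Real.log (gevTransform θ x) = -((x - θ.2.1) * invLogMean θ.2.2 (gevMargin θ x)) :=
  log_gevU_div hσ hw

lemma abs_log_gevTransform (hσ : 0 < θ.2.2) (hw : 0 < gevMargin θ x) :
    |Real.log (gevTransform θ x)| = |x - θ.2.1| * invLogMean θ.2.2 (gevMargin θ x) := by
  rw [log_gevTransform hσ hw, abs_neg, abs_mul, abs_of_pos (invLogMean_pos hσ hw)]

lemma posLog_gevTransform (hσ : 0 < θ.2.2) (hw : 0 < gevMargin θ x) :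
    Real.posLog (gevTransform θ x) =
      max 0 (θ.2.1 - x) * invLogMean θ.2.2 (gevMargin θ x) := by
  rw [Real.posLog_apply, log_gevTransform hσ hw, ← neg_mul, neg_sub,
    max_mul_of_nonneg _ _ (invLogMean_pos hσ hw).le, zero_mul]

lemma inv_add_inv_gevMargin (hσ : 0 < θ.2.2) (hw : 0 < gevMargin θ x) :
    θ.2.2⁻¹ + (gevMargin θ x)⁻¹ = θ.2.2⁻¹ * (1 + gevTransform θ x ^ θ.1) := by
  have hpow : gevTransform θ x ^ (-θ.1) = gevMargin θ x / θ.2.2 :=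
    (gevU_rpow_neg (one_add_shape_mul_pos hσ hw)).trans (one_add_mul_div hσ)
  rw [← inv_inv (gevTransform θ x ^ θ.1), ← Real.rpow_neg (gevTransform_pos hσ hw).le, hpow]
  field_simp

lemma measurable_gevTransform (θ : ℝ × ℝ × ℝ) : Measurable (gevTransform θ) :=
  (measurable_gevU θ.1).comp (by fun_prop)

lemma hasDerivAt_gevTransform (hσ : 0 < θ.2.2) (hw : 0 < gevMargin θ x) :
    HasDerivAt (gevTransform θ) (-(θ.2.2⁻¹ * gevTransform θ x ^ (θ.1 + 1))) x := by
  have hstd : HasDerivAt (fun x => (x - θ.2.1) / θ.2.2) θ.2.2⁻¹ x := by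
    simpa using ((hasDerivAt_id x).sub_const θ.2.1).div_const θ.2.2
  refine ((hasDerivAt_gevU (one_add_shape_mul_pos hσ hw)).comp x hstd).congr_deriv ?_
  rw [gevTransform, neg_mul, mul_comm]

lemma injOn_gevTransform (hσ : 0 < θ.2.2) : InjOn (gevTransform θ) {x | 0 < gevMargin θ x} :=
  (injOn_gevU θ.1).comp (fun _ _ _ _ h => sub_left_injective ((div_left_inj' hσ.ne').1 h))
    fun _ => one_add_shape_mul_pos hσ

lemma gevTransform_image_support (hσ : 0 < θ.2.2) :
    gevTransform θ '' {x | 0 < gevMargin θ x} = Ioi 0 := by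
  refine Subset.antisymm (image_subset_iff.2 fun x hw => gevTransform_pos hσ hw) fun u hu => ?_
  obtain ⟨z, hz, rfl⟩ := surjOn_gevU θ.1 hu
  have hstd : (θ.2.1 + θ.2.2 * z - θ.2.1) / θ.2.2 = z := by
    field_simp
    ring
  have hmargin : gevMargin θ (θ.2.1 + θ.2.2 * z) = θ.2.2 * (1 + θ.1 * z) := by
    rw [gevMargin]
    ring
  refine ⟨θ.2.1 + θ.2.2 * z, ?_, by rw [gevTransform, hstd]⟩
  rw [mem_ofPred_eq, hmargin]
  exact mul_pos hσ hz

end Transform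

section Integrability

variable {θ : ℝ × ℝ × ℝ} {γ : ℝ}

lemma measurable_gevMargin (θ : ℝ × ℝ × ℝ) : Measurable (gevMargin θ) := by
  unfold gevMargin
  fun_prop

lemma gevDensity_eq_indicator (θ : ℝ × ℝ × ℝ) :
    gevDensity θ = {x | 0 < gevMargin θ x}.indicator fun x =>
      θ.2.2⁻¹ * Real.exp (-gevTransform θ x) * gevTransform θ x ^ (θ.1 + 1) :=
  rfl

lemma measurable_gevDensity (θ : ℝ × ℝ × ℝ) : Measurable (gevDensity θ) := by
  have := measurable_gevTransform θ
  rw [gevDensity_eq_indicator]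
  exact Measurable.indicator (by fun_prop)
    (measurableSet_lt measurable_const (measurable_gevMargin θ))

lemma lintegral_gevTransform_gevMeasure (hσ : 0 < θ.2.2) (f : ℝ → ENNReal) :
    ∫⁻ x, f (gevTransform θ x) ∂gevMeasure θ =
      ∫⁻ u in Ioi 0, ENNReal.ofReal (Real.exp (-u)) * f u := by
  have hsupp : MeasurableSet {x | 0 < gevMargin θ x} :=
    measurableSet_lt measurable_const (measurable_gevMargin θ)
  have hvanish : Function.support (fun x => ENNReal.ofReal (gevDensity θ x) *
      f (gevTransform θ x)) ⊆ {x | 0 < gevMargin θ x} := by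
    intro x hx
    by_contra hw
    simp [gevDensity_eq_indicator, indicator_of_notMem hw] at hx
  rw [gevMeasure, lintegral_withDensity_eq_lintegral_mul_non_measurable _
    (measurable_gevDensity θ).ennreal_ofReal (by simp), ← gevTransform_image_support hσ,
    lintegral_image_eq_lintegral_abs_deriv_mul hsupp
      (fun x hw => (hasDerivAt_gevTransform hσ hw).hasDerivWithinAt) (injOn_gevTransform hσ)]
  simp only [Pi.mul_apply]
  rw [← setLIntegral_eq_of_support_subset hvanish]
  refine setLIntegral_congr_fun hsupp fun x hw => ?_
  have hu : 0 < gevTransform θ x := gevTransform_pos hσ hw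
  rw [gevDensity_eq_indicator, indicator_of_mem hw, abs_neg, abs_of_pos (by positivity),
    ← mul_assoc, ← ENNReal.ofReal_mul (by positivity)]
  ring_nf

/-- The growth in `u = u_{θ₀}(x)`, up to a constant, of the Lipschitz constants of `θ ↦ ℓ_θ(x)`
near `θ₀ = (γ, μ₀, σ₀)`. -/
noncomputable def gevEnvelope (γ u : ℝ) : ℝ :=
  max 1 u ^ 4 * ((1 + |Real.log u|) ^ 2 * (1 + u ^ γ))

lemma measurable_gevEnvelope (γ : ℝ) : Measurable (gevEnvelope γ) := by
  unfold gevEnvelope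
  fun_prop

lemma one_add_abs_log_le_rpow_neg {d u : ℝ} (hd : 0 < d) (hu : 0 < u) (hu1 : u ≤ 1) :
    1 + |Real.log u| ≤ (1 + d⁻¹) * u ^ (-d) := by
  have hone : 1 ≤ u ^ (-d) := Real.one_le_rpow_of_pos_of_le_one_of_nonpos hu hu1 (by linarith)
  have hlog : |Real.log u| ≤ d⁻¹ * u ^ (-d) := by
    rw [abs_of_nonpos (Real.log_nonpos hu.le hu1), ← Real.log_inv, Real.rpow_neg hu.le,
      ← Real.inv_rpow hu.le, ← div_eq_inv_mul]
    exact Real.log_le_rpow_div (inv_pos.2 hu).le hd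
  linarith

lemma gevEnvelope_le_of_le_one {c d u : ℝ} (hc : 0 ≤ c) (hγc : -γ ≤ c) (hd : 0 < d) (hu : 0 < u)
    (hu1 : u ≤ 1) : gevEnvelope γ u ≤ 2 * (1 + d⁻¹) ^ 2 * u ^ (-(c + 2 * d)) := by
  have hlog := one_add_abs_log_le_rpow_neg hd hu hu1
  have hpow : 1 + u ^ γ ≤ 2 * u ^ (-c) := by
    have hone : 1 ≤ u ^ (-c) := Real.one_le_rpow_of_pos_of_le_one_of_nonpos hu hu1 (by linarith)
    have hle : u ^ γ ≤ u ^ (-c) := Real.rpow_le_rpow_of_exponent_ge hu hu1 (by linarith)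
    linarith
  have hsplit : u ^ (-(c + 2 * d)) = (u ^ (-d)) ^ 2 * u ^ (-c) := by
    rw [← Real.rpow_mul_natCast hu.le, ← Real.rpow_add hu]
    congr 1
    push_cast
    ring
  calc gevEnvelope γ u = (1 + |Real.log u|) ^ 2 * (1 + u ^ γ) := by
        rw [gevEnvelope, max_eq_left hu1, one_pow, one_mul]
    _ ≤ ((1 + d⁻¹) * u ^ (-d)) ^ 2 * (2 * u ^ (-c)) := by gcongr
    _ = 2 * (1 + d⁻¹) ^ 2 * u ^ (-(c + 2 * d)) := by
        rw [hsplit]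
        ring

lemma gevEnvelope_le_of_one_le {u : ℝ} (hu1 : 1 ≤ u) :
    gevEnvelope γ u ≤ 2 * u ^ (6 + |γ|) := by
  have hu : 0 < u := by linarith
  have hlog : 1 + |Real.log u| ≤ u := by
    rw [abs_of_nonneg (Real.log_nonneg hu1)]
    linarith [Real.log_le_sub_one_of_pos hu]
  have hpow : 1 + u ^ γ ≤ 2 * u ^ |γ| := by
    have hone : 1 ≤ u ^ |γ| := Real.one_le_rpow hu1 (abs_nonneg γ)
    have hle : u ^ γ ≤ u ^ |γ| := Real.rpow_le_rpow_of_exponent_le hu1 (le_abs_self γ)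
    linarith
  calc gevEnvelope γ u = u ^ 4 * ((1 + |Real.log u|) ^ 2 * (1 + u ^ γ)) := by
        rw [gevEnvelope, max_eq_right hu1]
    _ ≤ u ^ 4 * (u ^ 2 * (2 * u ^ |γ|)) := by gcongr
    _ = 2 * u ^ (6 + |γ|) := by
        rw [Real.rpow_add hu, Real.rpow_ofNat]
        ring

lemma exists_gevEnvelope_le {a : ℝ} (ha : 0 < a) (hγa : -γ < a) :
    ∃ K : ℝ, ∀ u, 0 < u → gevEnvelope γ u ≤ K * (u ^ (-a) + u ^ (6 + |γ|)) := by
  obtain ⟨c, hc, hca⟩ := exists_between (max_lt ha hγa)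
  obtain ⟨hc0, hγc⟩ := max_lt_iff.1 hc
  have hd : 0 < (a - c) / 2 := by linarith
  refine ⟨2 * (1 + ((a - c) / 2)⁻¹) ^ 2 + 2, fun u hu => ?_⟩
  rcases le_total u 1 with hu1 | hu1
  · calc gevEnvelope γ u ≤ 2 * (1 + ((a - c) / 2)⁻¹) ^ 2 * u ^ (-(c + 2 * ((a - c) / 2))) :=
          gevEnvelope_le_of_le_one hc0.le hγc.le hd hu hu1
      _ = 2 * (1 + ((a - c) / 2)⁻¹) ^ 2 * u ^ (-a) := by
          rw [mul_div_cancel₀ _ two_ne_zero, add_sub_cancel]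
      _ ≤ _ := by gcongr <;> linarith [Real.rpow_pos_of_pos hu (6 + |γ|)]
  · calc gevEnvelope γ u ≤ 2 * u ^ (6 + |γ|) := gevEnvelope_le_of_one_le hu1
      _ ≤ _ := by
        gcongr
        · exact le_add_of_nonneg_left (by positivity)
        · exact le_add_of_nonneg_left (by positivity)

lemma gevEnvelope_nonneg {u : ℝ} (hu : 0 < u) : 0 ≤ gevEnvelope γ u := by
  unfold gevEnvelope
  positivity

lemma integrableOn_exp_neg_mul_gevEnvelope_sq (hγ : -(1 / 2) < γ) :
    IntegrableOn (fun u => Real.exp (-u) * gevEnvelope γ u ^ 2) (Ioi 0) := by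
  obtain ⟨a, hmax, ha⟩ := exists_between (max_lt (by norm_num : (0 : ℝ) < 1 / 2) (neg_lt.1 hγ))
  obtain ⟨ha0, hγa⟩ := max_lt_iff.1 hmax
  obtain ⟨K, hK⟩ := exists_gevEnvelope_le ha0 hγa
  have hdom : IntegrableOn (fun u : ℝ => 2 * K ^ 2 * (Real.exp (-u) * u ^ ((1 - 2 * a) - 1) +
      Real.exp (-u) * u ^ ((1 + 2 * (6 + |γ|)) - 1))) (Ioi 0) :=
    ((Real.GammaIntegral_convergent (by linarith)).add
      (Real.GammaIntegral_convergent (by positivity))).const_mul _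
  have hmeas := measurable_gevEnvelope γ
  refine hdom.mono' (by fun_prop) (ae_restrict_of_forall_mem measurableSet_Ioi fun u hu => ?_)
  have hu : 0 < u := hu
  have hsq (b : ℝ) : (u ^ b) ^ 2 = u ^ (2 * b) := by
    rw [← Real.rpow_mul_natCast hu.le, mul_comm]
    norm_num
  rw [Real.norm_of_nonneg (by positivity)]
  calc Real.exp (-u) * gevEnvelope γ u ^ 2
      ≤ Real.exp (-u) * (K * (u ^ (-a) + u ^ (6 + |γ|))) ^ 2 := by
        gcongr
        · exact gevEnvelope_nonneg hu
        · exact hK u hu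
    _ ≤ Real.exp (-u) * (K ^ 2 * (2 * ((u ^ (-a)) ^ 2 + (u ^ (6 + |γ|)) ^ 2))) := by
        rw [mul_pow]
        gcongr
        exact add_sq_le
    _ = _ := by
        rw [hsq, hsq]
        ring_nf

lemma lintegral_sq_gevEnvelope_lt_top (hγ : -(1 / 2) < θ.1) (hσ : 0 < θ.2.2) (C : ℝ) :
    ∫⁻ x, ENNReal.ofReal ((C * gevEnvelope θ.1 (gevTransform θ x)) ^ 2) ∂gevMeasure θ < ⊤ := by
  rw [lintegral_gevTransform_gevMeasure hσ
    fun u => ENNReal.ofReal ((C * gevEnvelope θ.1 u) ^ 2)]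
  refine lt_of_eq_of_lt (lintegral_congr fun u => ?_)
    ((integrableOn_exp_neg_mul_gevEnvelope_sq hγ).const_mul (C ^ 2)).lintegral_lt_top
  rw [← ENNReal.ofReal_mul (Real.exp_pos _).le]
  ring_nf

end Integrability

lemma abs_shape_sub_le (θ₁ θ₂ : ℝ × ℝ × ℝ) : |θ₁.1 - θ₂.1| ≤ ‖θ₁ - θ₂‖ :=
  norm_fst_le (θ₁ - θ₂)

lemma abs_loc_sub_le (θ₁ θ₂ : ℝ × ℝ × ℝ) : |θ₁.2.1 - θ₂.2.1| ≤ ‖θ₁ - θ₂‖ :=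
  (norm_fst_le (θ₁ - θ₂).2).trans (norm_snd_le (θ₁ - θ₂))

lemma abs_sub_loc_le_add (θ₀ θ : ℝ × ℝ × ℝ) (x : ℝ) :
    |x - θ.2.1| ≤ |x - θ₀.2.1| + |θ.2.1 - θ₀.2.1| := by
  rw [abs_sub_comm θ.2.1]
  exact abs_sub_le x θ₀.2.1 θ.2.1

lemma abs_scale_sub_le (θ₁ θ₂ : ℝ × ℝ × ℝ) : |θ₁.2.2 - θ₂.2.2| ≤ ‖θ₁ - θ₂‖ :=
  (norm_snd_le (θ₁ - θ₂).2).trans (norm_snd_le (θ₁ - θ₂))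

/-- `θ` is close to `θ₀` relative to the position of `x` in the support of `θ₀`: scale and margin
are at least a quarter of those at `θ₀`, and the location moves by at most half of either. -/
structure GevNear (θ₀ : ℝ × ℝ × ℝ) (x : ℝ) (θ : ℝ × ℝ × ℝ) : Prop where
  shape : |θ.1 - θ₀.1| ≤ 1
  scale : θ₀.2.2 ≤ 4 * θ.2.2
  margin : gevMargin θ₀ x ≤ 4 * gevMargin θ x
  loc_scale : 2 * |θ.2.1 - θ₀.2.1| ≤ θ₀.2.2
  loc_margin : 2 * |θ.2.1 - θ₀.2.1| ≤ gevMargin θ₀ x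

section Near

variable {θ₀ θ : ℝ × ℝ × ℝ} {x ε : ℝ}

-- Lowering `σ₀` by the margin keeps the other parameters and makes the margin vanish.
lemma le_gevMargin_of_forall_ball (hε : 0 < ε)
    (hx : ∀ θ ∈ Metric.ball θ₀ ε, 0 < gevMargin θ x) : ε ≤ gevMargin θ₀ x := by
  by_contra! hlt
  have hw : 0 < gevMargin θ₀ x := hx θ₀ (Metric.mem_ball_self hε)
  have hball : (θ₀.1, θ₀.2.1, θ₀.2.2 - gevMargin θ₀ x) ∈ Metric.ball θ₀ ε := by
    rw [mem_ball_iff_norm]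
    simp [Prod.norm_def, abs_of_pos hw, hlt, hε]
  have hzero : gevMargin (θ₀.1, θ₀.2.1, θ₀.2.2 - gevMargin θ₀ x) x = 0 := by
    simp only [gevMargin]
    ring
  exact (hx _ hball).ne' hzero

-- `θ` is the midpoint of `θ₀` and a point of the doubled ball, and the margin is affine in `θ`
-- up to the product of the shape and location increments.
lemma gevMargin_le_four_mul (hε : 0 < ε) (hε1 : ε ≤ 1 / 2)
    (hx : ∀ θ ∈ Metric.ball θ₀ (2 * ε), 0 < gevMargin θ x) (hθ : θ ∈ Metric.ball θ₀ ε) :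
    gevMargin θ₀ x ≤ 4 * gevMargin θ x := by
  have hw : 2 * ε ≤ gevMargin θ₀ x := le_gevMargin_of_forall_ball (by positivity) hx
  rw [mem_ball_iff_norm] at hθ
  have hfar : 0 < gevMargin (θ₀ + (2 : ℝ) • (θ - θ₀)) x := by
    refine hx _ ?_
    rw [mem_ball_iff_norm, add_sub_cancel_left, norm_smul, Real.norm_two]
    gcongr
  have hmid : gevMargin θ x = (gevMargin θ₀ x + gevMargin (θ₀ + (2 : ℝ) • (θ - θ₀)) x) / 2 +
      (θ.1 - θ₀.1) * (θ.2.1 - θ₀.2.1) := by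
    simp only [gevMargin, Prod.fst_add, Prod.snd_add, Prod.smul_fst, Prod.smul_snd, Prod.fst_sub,
      Prod.snd_sub, smul_eq_mul]
    ring
  have hprod : |(θ.1 - θ₀.1) * (θ.2.1 - θ₀.2.1)| ≤ 1 / 2 * ε := by
    rw [abs_mul]
    gcongr
    · exact ((abs_shape_sub_le θ θ₀).trans hθ.le).trans hε1
    · exact (abs_loc_sub_le θ θ₀).trans hθ.le
  linarith [neg_le_of_abs_le hprod]

lemma gevNear_of_mem_ball (hε : 0 < ε) (hε1 : ε ≤ 1 / 2) (hεσ : 2 * ε ≤ θ₀.2.2)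
    (hx : ∀ θ ∈ Metric.ball θ₀ (2 * ε), 0 < gevMargin θ x) (hθ : θ ∈ Metric.ball θ₀ ε) :
    GevNear θ₀ x θ := by
  have hmargin := gevMargin_le_four_mul hε hε1 hx hθ
  have hw : 2 * ε ≤ gevMargin θ₀ x := le_gevMargin_of_forall_ball (by positivity) hx
  rw [mem_ball_iff_norm] at hθ
  have hshape := abs_shape_sub_le θ θ₀
  have hloc := abs_loc_sub_le θ θ₀
  have hscale := neg_le_of_abs_le (abs_scale_sub_le θ θ₀)
  constructor <;> linarith

end Near

section Lipschitz

variable {θ₀ θ θ₁ θ₂ : ℝ × ℝ × ℝ} {x s : ℝ}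

lemma GevNear.scale_pos (h : GevNear θ₀ x θ) (hσ : 0 < θ₀.2.2) : 0 < θ.2.2 := by
  linarith [h.scale]

lemma GevNear.margin_pos (h : GevNear θ₀ x θ) (hw : 0 < gevMargin θ₀ x) : 0 < gevMargin θ x := by
  linarith [h.margin]

lemma GevNear.abs_shape_le (h : GevNear θ₀ x θ) : |θ.1| ≤ |θ₀.1| + 1 := by
  linarith [abs_sub_abs_le_abs_sub θ.1 θ₀.1, h.shape]

lemma GevNear.invLogMean_le (h : GevNear θ₀ x θ) (hσ : 0 < θ₀.2.2) (hw : 0 < gevMargin θ₀ x) :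
    invLogMean θ.2.2 (gevMargin θ x) ≤ 4 * invLogMean θ₀.2.2 (gevMargin θ₀ x) := by
  calc invLogMean θ.2.2 (gevMargin θ x)
      ≤ invLogMean (4⁻¹ * θ₀.2.2) (4⁻¹ * gevMargin θ₀ x) :=
        invLogMean_anti (by positivity) (by positivity) (by linarith [h.scale])
          (by linarith [h.margin])
    _ = 4 * invLogMean θ₀.2.2 (gevMargin θ₀ x) := by rw [invLogMean_mul_mul, inv_inv]

lemma GevNear.mul_invLogMean_le (h : GevNear θ₀ x θ) (hσ : 0 < θ₀.2.2)
    (hw : 0 < gevMargin θ₀ x) {r r₀ : ℝ} (hr₀ : 0 ≤ r₀) (hr : r ≤ r₀ + |θ.2.1 - θ₀.2.1|) :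
    r * invLogMean θ.2.2 (gevMargin θ x) ≤
      4 * (r₀ * invLogMean θ₀.2.2 (gevMargin θ₀ x)) + 2 := by
  set m := min θ₀.2.2 (gevMargin θ₀ x)
  have hm : 0 < m := lt_min hσ hw
  have hJ := (invLogMean_pos (h.scale_pos hσ) (h.margin_pos hw)).le
  have hJ₀ := (invLogMean_pos hσ hw).le
  have hloc : |θ.2.1 - θ₀.2.1| ≤ m / 2 := by
    linarith [le_min h.loc_scale h.loc_margin]
  have hhalf : |θ.2.1 - θ₀.2.1| * invLogMean θ₀.2.2 (gevMargin θ₀ x) ≤ 1 / 2 :=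
    calc _ ≤ m / 2 * m⁻¹ := by
          gcongr
          exact invLogMean_le_inv hm (min_le_left _ _) (min_le_right _ _)
      _ = 1 / 2 := by field_simp
  calc r * invLogMean θ.2.2 (gevMargin θ x)
      ≤ (r₀ + |θ.2.1 - θ₀.2.1|) * (4 * invLogMean θ₀.2.2 (gevMargin θ₀ x)) := by
        gcongr
        exact h.invLogMean_le hσ hw
    _ ≤ 4 * (r₀ * invLogMean θ₀.2.2 (gevMargin θ₀ x)) + 2 := by linarith

lemma GevNear.abs_log_gevTransform_le (h : GevNear θ₀ x θ) (hσ : 0 < θ₀.2.2)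
    (hw : 0 < gevMargin θ₀ x) :
    |Real.log (gevTransform θ x)| ≤ 4 * |Real.log (gevTransform θ₀ x)| + 2 := by
  rw [abs_log_gevTransform (h.scale_pos hσ) (h.margin_pos hw), abs_log_gevTransform hσ hw]
  exact h.mul_invLogMean_le hσ hw (abs_nonneg _) (abs_sub_loc_le_add θ₀ θ x)

lemma GevNear.gevTransform_le (h : GevNear θ₀ x θ) (hσ : 0 < θ₀.2.2)
    (hw : 0 < gevMargin θ₀ x) :
    gevTransform θ x ≤ Real.exp 2 * max 1 (gevTransform θ₀ x) ^ 4 := by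
  have hσθ := h.scale_pos hσ
  have hwθ := h.margin_pos hw
  have hposLog : Real.posLog (gevTransform θ x) ≤ 4 * Real.posLog (gevTransform θ₀ x) + 2 := by
    rw [posLog_gevTransform hσθ hwθ, posLog_gevTransform hσ hw]
    refine h.mul_invLogMean_le hσ hw (le_max_left _ _) (max_le (by positivity) ?_)
    linarith [le_abs_self (θ.2.1 - θ₀.2.1), le_max_right 0 (θ₀.2.1 - x)]
  have hu₀ : 0 ≤ gevTransform θ₀ x := (gevTransform_pos hσ hw).le
  rw [← Real.log_le_log_iff (gevTransform_pos hσθ hwθ) (by positivity),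
    Real.log_mul (by positivity) (by positivity), Real.log_exp, Real.log_pow,
    ← Real.posLog_eq_log_max_one hu₀]
  push_cast
  linarith [le_max_right 0 (Real.log (gevTransform θ x)),
    Real.posLog_apply (x := gevTransform θ x)]

/-- The point at parameter `s` of the segment from the scale `σ` to the margin; `-log u_θ(x)` is
`x - μ` times the integral of its inverse over `s ∈ [0, 1]`. -/
def gevSegment (θ : ℝ × ℝ × ℝ) (x s : ℝ) : ℝ := (1 - s) * θ.2.2 + s * gevMargin θ x

lemma gevSegment_pos (hσ : 0 < θ.2.2) (hw : 0 < gevMargin θ x) (hs : s ∈ Icc (0 : ℝ) 1) :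
    0 < gevSegment θ x s :=
  segment_pos hσ hw hs

lemma GevNear.gevSegment_le (h : GevNear θ₀ x θ) (hs : s ∈ Icc (0 : ℝ) 1) :
    gevSegment θ₀ x s ≤ 4 * gevSegment θ x s :=
  (segment_mono h.scale h.margin hs).trans_eq (by simp only [gevSegment]; ring)

lemma abs_gevSegment_sub_le (θ₁ θ₂ : ℝ × ℝ × ℝ) (x : ℝ) (hs : s ∈ Icc (0 : ℝ) 1) :
    |gevSegment θ₁ x s - gevSegment θ₂ x s| ≤
      (1 + |θ₁.1| + s * |x - θ₂.2.1|) * ‖θ₁ - θ₂‖ := by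
  have hs0 : 0 ≤ s := hs.1
  have hsplit : gevSegment θ₁ x s - gevSegment θ₂ x s = (θ₁.2.2 - θ₂.2.2) +
      s * (x - θ₂.2.1) * (θ₁.1 - θ₂.1) + -(s * θ₁.1 * (θ₁.2.1 - θ₂.2.1)) := by
    simp only [gevSegment, gevMargin]
    ring
  calc |gevSegment θ₁ x s - gevSegment θ₂ x s|
      ≤ |θ₁.2.2 - θ₂.2.2| + s * |x - θ₂.2.1| * |θ₁.1 - θ₂.1| +
        s * |θ₁.1| * |θ₁.2.1 - θ₂.2.1| := by
        rw [hsplit]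
        refine (abs_add_three _ _ _).trans_eq ?_
        simp only [abs_neg, abs_mul, abs_of_nonneg hs0]
    _ ≤ ‖θ₁ - θ₂‖ + s * |x - θ₂.2.1| * ‖θ₁ - θ₂‖ + 1 * |θ₁.1| * ‖θ₁ - θ₂‖ := by
        gcongr
        exacts [abs_scale_sub_le θ₁ θ₂, abs_shape_sub_le θ₁ θ₂, hs.2, abs_loc_sub_le θ₁ θ₂]
    _ = (1 + |θ₁.1| + s * |x - θ₂.2.1|) * ‖θ₁ - θ₂‖ := by ring

lemma GevNear.abs_sub_loc_mul_inv_gevSegment_le (h : GevNear θ₀ x θ) (hσ : 0 < θ₀.2.2)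
    (hw : 0 < gevMargin θ₀ x) (hs : s ∈ Icc (0 : ℝ) 1) :
    |x - θ.2.1| * (gevSegment θ₀ x s)⁻¹ ≤ |x - θ₀.2.1| * (gevSegment θ₀ x s)⁻¹ + 1 / 2 := by
  have hp := gevSegment_pos hσ hw hs
  have hloc : 2 * |θ.2.1 - θ₀.2.1| ≤ gevSegment θ₀ x s := le_segment h.loc_scale h.loc_margin hs
  calc |x - θ.2.1| * (gevSegment θ₀ x s)⁻¹
      ≤ (|x - θ₀.2.1| + gevSegment θ₀ x s / 2) * (gevSegment θ₀ x s)⁻¹ := by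
        gcongr
        linarith [abs_sub_loc_le_add θ₀ θ x]
    _ = |x - θ₀.2.1| * (gevSegment θ₀ x s)⁻¹ + 1 / 2 := by field_simp

lemma GevNear.abs_div_gevSegment_sub_le (h₁ : GevNear θ₀ x θ₁) (h₂ : GevNear θ₀ x θ₂)
    (hσ : 0 < θ₀.2.2) (hw : 0 < gevMargin θ₀ x) (hs : s ∈ Icc (0 : ℝ) 1) :
    |(x - θ₁.2.1) / gevSegment θ₁ x s - (x - θ₂.2.1) / gevSegment θ₂ x s| ≤
      ‖θ₁ - θ₂‖ * (4 * (gevSegment θ₀ x s)⁻¹ +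
        16 * ((|θ₀.1| + 2) * (gevSegment θ₀ x s)⁻¹ +
            s * (|x - θ₀.2.1| * (gevSegment θ₀ x s)⁻¹ + 1 / 2)) *
          (|x - θ₀.2.1| * (gevSegment θ₀ x s)⁻¹ + 1 / 2)) := by
  have hs0 : 0 ≤ s := hs.1
  have hy : |(x - θ₁.2.1) - (x - θ₂.2.1)| ≤ ‖θ₁ - θ₂‖ := by
    rw [sub_sub_sub_cancel_left, abs_sub_comm]
    exact abs_loc_sub_le θ₁ θ₂
  have hshape : 1 + |θ₁.1| ≤ |θ₀.1| + 2 := by linarith [h₁.abs_shape_le]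
  have hsub := abs_gevSegment_sub_le θ₁ θ₂ x hs
  have hratio := h₂.abs_sub_loc_mul_inv_gevSegment_le hσ hw hs
  have hp := gevSegment_pos hσ hw hs
  have hquot := abs_div_sub_div_le (y₁ := x - θ₁.2.1) (y₂ := x - θ₂.2.1) hp four_pos
    (h₁.gevSegment_le hs) (h₂.gevSegment_le hs)
  set p := gevSegment θ₀ x s
  calc _ ≤ 4 * ‖θ₁ - θ₂‖ / p +
        4 ^ 2 * (|x - θ₂.2.1| * ((1 + |θ₁.1| + s * |x - θ₂.2.1|) * ‖θ₁ - θ₂‖)) / p ^ 2 := by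
        refine hquot.trans ?_
        gcongr
    _ = ‖θ₁ - θ₂‖ * (4 * p⁻¹ + 16 * ((1 + |θ₁.1|) * p⁻¹ + s * (|x - θ₂.2.1| * p⁻¹)) *
        (|x - θ₂.2.1| * p⁻¹)) := by
        field_simp
        ring
    _ ≤ _ := by gcongr

lemma abs_sub_loc_mul_inv_gevMargin_le (hσ : 0 < θ.2.2) (hw : 0 < gevMargin θ x) :
    |x - θ.2.1| * (gevMargin θ x)⁻¹ ≤
      θ.2.2 * (θ.2.2⁻¹ + (gevMargin θ x)⁻¹) * |Real.log (gevTransform θ x)| := by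
  have hfactor : (gevMargin θ x)⁻¹ =
      θ.2.2 * (θ.2.2⁻¹ + (gevMargin θ x)⁻¹) * (θ.2.2 + gevMargin θ x)⁻¹ := by
    field_simp
    ring
  calc |x - θ.2.1| * (gevMargin θ x)⁻¹
      = θ.2.2 * (θ.2.2⁻¹ + (gevMargin θ x)⁻¹) *
          (|x - θ.2.1| * (θ.2.2 + gevMargin θ x)⁻¹) := by
        rw [mul_left_comm, ← hfactor]
    _ ≤ θ.2.2 * (θ.2.2⁻¹ + (gevMargin θ x)⁻¹) * |Real.log (gevTransform θ x)| := by
        rw [abs_log_gevTransform hσ hw]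
        gcongr
        exact inv_le_invLogMean hσ hw (by linarith) (by linarith)

lemma inv_gevSegment_combination_le (hσ : 0 < θ.2.2) (hw : 0 < gevMargin θ x)
    (hs : s ∈ Icc (0 : ℝ) 1) :
    (|θ.1| + 2) * (gevSegment θ x s)⁻¹ + s * (|x - θ.2.1| * (gevSegment θ x s)⁻¹ + 1 / 2) ≤
      (|θ.1| + 2 + θ.2.2) * (θ.2.2⁻¹ + (gevMargin θ x)⁻¹) *
        (1 + |Real.log (gevTransform θ x)|) := by
  set Q := θ.2.2⁻¹ + (gevMargin θ x)⁻¹ with hQ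
  have hinv : (gevSegment θ x s)⁻¹ ≤ Q := inv_segment_le_inv_add_inv hσ hw hs
  have hslope : s * (gevSegment θ x s)⁻¹ ≤ (gevMargin θ x)⁻¹ := mul_inv_segment_le_inv hσ hw hs
  have hloc : |x - θ.2.1| * (gevMargin θ x)⁻¹ ≤ θ.2.2 * Q * |Real.log (gevTransform θ x)| :=
    abs_sub_loc_mul_inv_gevMargin_le hσ hw
  have hone : 1 ≤ θ.2.2 * Q := by
    rw [hQ, mul_add, mul_inv_cancel₀ hσ.ne']
    exact le_add_of_nonneg_right (by positivity)
  calc _ = (|θ.1| + 2) * (gevSegment θ x s)⁻¹ +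
        (|x - θ.2.1| * (s * (gevSegment θ x s)⁻¹) + s * (1 / 2)) := by ring
    _ ≤ (|θ.1| + 2) * Q + (|x - θ.2.1| * (gevMargin θ x)⁻¹ + 1 * 1) := by
        gcongr
        exacts [hs.2, by norm_num]
    _ ≤ (|θ.1| + 2) * Q * (1 + |Real.log (gevTransform θ x)|) +
        (θ.2.2 * Q * |Real.log (gevTransform θ x)| + θ.2.2 * Q) := by
        rw [one_mul]
        exact add_le_add (le_mul_of_one_le_right (by positivity)
          (le_add_of_nonneg_right (abs_nonneg _))) (add_le_add hloc hone)
    _ = _ := by ring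

lemma log_gevTransform_eq_integral (hσ : 0 < θ.2.2) (hw : 0 < gevMargin θ x) :
    Real.log (gevTransform θ x) = -∫ s in (0 : ℝ)..1, (x - θ.2.1) / gevSegment θ x s := by
  simp only [log_gevTransform hσ hw, invLogMean, gevSegment, div_eq_mul_inv,
    intervalIntegral.integral_const_mul]

lemma intervalIntegrable_div_gevSegment (hσ : 0 < θ.2.2) (hw : 0 < gevMargin θ x) (y : ℝ) :
    IntervalIntegrable (fun s => y / gevSegment θ x s) volume 0 1 :=
  (intervalIntegrable_inv_segment hσ hw).const_mul y

lemma GevNear.abs_div_gevSegment_sub_le_of_le (h₁ : GevNear θ₀ x θ₁) (h₂ : GevNear θ₀ x θ₂)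
    (hσ : 0 < θ₀.2.2) (hw : 0 < gevMargin θ₀ x) (hs : s ∈ Icc (0 : ℝ) 1) {K : ℝ}
    (hK : (|θ₀.1| + 2) * (gevSegment θ₀ x s)⁻¹ +
      s * (|x - θ₀.2.1| * (gevSegment θ₀ x s)⁻¹ + 1 / 2) ≤ K) :
    |(x - θ₁.2.1) / gevSegment θ₁ x s - (x - θ₂.2.1) / gevSegment θ₂ x s| ≤
      16 * K * ‖θ₁ - θ₂‖ * (|x - θ₀.2.1| / gevSegment θ₀ x s + 1) := by
  have hs0 : 0 ≤ s := hs.1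
  have hp := gevSegment_pos hσ hw hs
  have hpK : 2 * (gevSegment θ₀ x s)⁻¹ ≤ K := by
    refine le_trans (le_add_of_le_of_nonneg ?_ (by positivity)) hK
    gcongr
    exact le_add_of_nonneg_left (abs_nonneg _)
  have hfour : 4 * (gevSegment θ₀ x s)⁻¹ ≤ 8 * K := by linarith [inv_pos.2 hp]
  calc _ ≤ ‖θ₁ - θ₂‖ * (4 * (gevSegment θ₀ x s)⁻¹ +
        16 * K * (|x - θ₀.2.1| * (gevSegment θ₀ x s)⁻¹ + 1 / 2)) := by
        refine (h₁.abs_div_gevSegment_sub_le h₂ hσ hw hs).trans ?_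
        gcongr
    _ ≤ ‖θ₁ - θ₂‖ * (8 * K + 16 * K * (|x - θ₀.2.1| * (gevSegment θ₀ x s)⁻¹ + 1 / 2)) := by
        gcongr ‖θ₁ - θ₂‖ * (?_ + _)
    _ = _ := by ring

lemma GevNear.abs_log_gevTransform_sub_le (h₁ : GevNear θ₀ x θ₁) (h₂ : GevNear θ₀ x θ₂)
    (hσ : 0 < θ₀.2.2) (hw : 0 < gevMargin θ₀ x) :
    |Real.log (gevTransform θ₁ x) - Real.log (gevTransform θ₂ x)| ≤
      16 * (|θ₀.1| + 2 + θ₀.2.2) * (θ₀.2.2⁻¹ + (gevMargin θ₀ x)⁻¹) *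
        (1 + |Real.log (gevTransform θ₀ x)|) ^ 2 * ‖θ₁ - θ₂‖ := by
  have hint₁ := intervalIntegrable_div_gevSegment (h₁.scale_pos hσ) (h₁.margin_pos hw) (x - θ₁.2.1)
  have hint₂ := intervalIntegrable_div_gevSegment (h₂.scale_pos hσ) (h₂.margin_pos hw) (x - θ₂.2.1)
  have hint₀ := intervalIntegrable_div_gevSegment hσ hw |x - θ₀.2.1|
  have hlog₀ : ∫ s in (0 : ℝ)..1, |x - θ₀.2.1| / gevSegment θ₀ x s =
      |Real.log (gevTransform θ₀ x)| := by
    simp only [abs_log_gevTransform hσ hw, invLogMean, gevSegment, div_eq_mul_inv,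
      intervalIntegral.integral_const_mul]
  set K := (|θ₀.1| + 2 + θ₀.2.2) * (θ₀.2.2⁻¹ + (gevMargin θ₀ x)⁻¹) *
    (1 + |Real.log (gevTransform θ₀ x)|) with hK
  calc |Real.log (gevTransform θ₁ x) - Real.log (gevTransform θ₂ x)|
      = |∫ s in (0 : ℝ)..1, ((x - θ₁.2.1) / gevSegment θ₁ x s -
          (x - θ₂.2.1) / gevSegment θ₂ x s)| := by
        rw [log_gevTransform_eq_integral (h₁.scale_pos hσ) (h₁.margin_pos hw),
          log_gevTransform_eq_integral (h₂.scale_pos hσ) (h₂.margin_pos hw),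
          intervalIntegral.integral_sub hint₁ hint₂, neg_sub_neg, abs_sub_comm]
    _ ≤ ∫ s in (0 : ℝ)..1, 16 * K * ‖θ₁ - θ₂‖ * (|x - θ₀.2.1| / gevSegment θ₀ x s + 1) := by
        rw [← Real.norm_eq_abs]
        refine intervalIntegral.norm_integral_le_of_norm_le zero_le_one
          (ae_of_all _ fun s hs => ?_) ((hint₀.add intervalIntegrable_const).const_mul _)
        have hs' := Ioc_subset_Icc_self hs
        exact h₁.abs_div_gevSegment_sub_le_of_le h₂ hσ hw hs'
          (inv_gevSegment_combination_le hσ hw hs')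
    _ = 16 * K * ‖θ₁ - θ₂‖ * (|Real.log (gevTransform θ₀ x)| + 1) := by
        rw [intervalIntegral.integral_const_mul,
          intervalIntegral.integral_add hint₀ intervalIntegrable_const, hlog₀,
          intervalIntegral.integral_const]
        simp
    _ = _ := by
        rw [hK]
        ring

lemma gevLogDensity_sub (θ₁ θ₂ : ℝ × ℝ × ℝ) (x : ℝ) :
    gevLogDensity θ₁ x - gevLogDensity θ₂ x =
      (Real.log θ₂.2.2 - Real.log θ₁.2.2) + (gevTransform θ₂ x - gevTransform θ₁ x) +
        (θ₁.1 - θ₂.1) * Real.log (gevTransform θ₁ x) +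
        (θ₂.1 + 1) * (Real.log (gevTransform θ₁ x) - Real.log (gevTransform θ₂ x)) := by
  simp only [gevLogDensity, gevTransform]
  ring

lemma GevNear.abs_gevLogDensity_sub_le (h₁ : GevNear θ₀ x θ₁) (h₂ : GevNear θ₀ x θ₂)
    (hσ : 0 < θ₀.2.2) (hw : 0 < gevMargin θ₀ x) :
    |gevLogDensity θ₁ x - gevLogDensity θ₂ x| ≤
      (4 * θ₀.2.2⁻¹ + 4 * (1 + |Real.log (gevTransform θ₀ x)|)) * ‖θ₁ - θ₂‖ +
        (Real.exp 2 * max 1 (gevTransform θ₀ x) ^ 4 + (|θ₀.1| + 2)) *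
          |Real.log (gevTransform θ₁ x) - Real.log (gevTransform θ₂ x)| := by
  have hscale : |Real.log θ₂.2.2 - Real.log θ₁.2.2| ≤ 4 * θ₀.2.2⁻¹ * ‖θ₁ - θ₂‖ := by
    refine (abs_log_sub_log_le (c := θ₀.2.2 / 4) (by positivity) (by linarith [h₁.scale])
      (by linarith [h₂.scale])).trans ?_
    rw [inv_div, div_eq_mul_inv, abs_sub_comm]
    gcongr
    exact abs_scale_sub_le θ₁ θ₂
  have htransform : |gevTransform θ₂ x - gevTransform θ₁ x| ≤
      Real.exp 2 * max 1 (gevTransform θ₀ x) ^ 4 *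
        |Real.log (gevTransform θ₁ x) - Real.log (gevTransform θ₂ x)| := by
    rw [abs_sub_comm]
    exact abs_sub_le_mul_abs_log_sub_log
      (gevTransform_pos (h₂.scale_pos hσ) (h₂.margin_pos hw))
      (gevTransform_pos (h₁.scale_pos hσ) (h₁.margin_pos hw))
      (h₂.gevTransform_le hσ hw) (h₁.gevTransform_le hσ hw)
  have hshape : |(θ₁.1 - θ₂.1) * Real.log (gevTransform θ₁ x)| ≤
      ‖θ₁ - θ₂‖ * (4 * (1 + |Real.log (gevTransform θ₀ x)|)) := by
    rw [abs_mul]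
    gcongr
    · exact abs_shape_sub_le θ₁ θ₂
    · linarith [h₁.abs_log_gevTransform_le hσ hw]
  have hlog : |(θ₂.1 + 1) * (Real.log (gevTransform θ₁ x) - Real.log (gevTransform θ₂ x))| ≤
      (|θ₀.1| + 2) * |Real.log (gevTransform θ₁ x) - Real.log (gevTransform θ₂ x)| := by
    rw [abs_mul]
    gcongr
    linarith [abs_add_le θ₂.1 1, h₂.abs_shape_le, abs_one (α := ℝ)]
  rw [gevLogDensity_sub]
  refine (abs_add_le _ _).trans ((add_le_add_left (abs_add_three _ _ _) _).trans ?_)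
  linarith

lemma exists_abs_gevLogDensity_sub_le (hσ : 0 < θ₀.2.2) :
    ∃ C : ℝ, ∀ {x : ℝ} {θ₁ θ₂ : ℝ × ℝ × ℝ}, 0 < gevMargin θ₀ x →
      GevNear θ₀ x θ₁ → GevNear θ₀ x θ₂ →
      |gevLogDensity θ₁ x - gevLogDensity θ₂ x| ≤
        C * gevEnvelope θ₀.1 (gevTransform θ₀ x) * ‖θ₁ - θ₂‖ := by
  set g := |θ₀.1| + 2
  set B := 16 * (g + θ₀.2.2) * θ₀.2.2⁻¹ with hB
  refine ⟨4 * θ₀.2.2⁻¹ + 4 + (Real.exp 2 + g) * B, fun {x θ₁ θ₂} hw h₁ h₂ => ?_⟩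
  have hu := gevTransform_pos hσ hw
  have hlog := h₁.abs_log_gevTransform_sub_le h₂ hσ hw
  rw [inv_add_inv_gevMargin hσ hw, ← mul_assoc _ θ₀.2.2⁻¹, ← hB] at hlog
  set M := max 1 (gevTransform θ₀ x) ^ 4
  set L := 1 + |Real.log (gevTransform θ₀ x)|
  set U := 1 + gevTransform θ₀ x ^ θ₀.1
  have hM : 1 ≤ M := one_le_pow₀ (le_max_left _ _)
  have hL : 1 ≤ L := le_add_of_nonneg_right (abs_nonneg _)
  have hU : 1 ≤ U := le_add_of_nonneg_right (by positivity)
  have hLE : L ≤ M * (L ^ 2 * U) :=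
    calc L = 1 * (L ^ 1 * 1) := by ring
      _ ≤ M * (L ^ 2 * U) := by
        gcongr
        exact one_le_two
  have hE : 1 ≤ M * (L ^ 2 * U) := hL.trans hLE
  calc |gevLogDensity θ₁ x - gevLogDensity θ₂ x|
      ≤ (4 * θ₀.2.2⁻¹ * 1 + 4 * L) * ‖θ₁ - θ₂‖ +
          (Real.exp 2 * M + g * 1) * (B * U * L ^ 2 * ‖θ₁ - θ₂‖) := by
        rw [mul_one, mul_one]
        refine (h₁.abs_gevLogDensity_sub_le h₂ hσ hw).trans ?_
        gcongr
    _ ≤ (4 * θ₀.2.2⁻¹ * (M * (L ^ 2 * U)) + 4 * (M * (L ^ 2 * U))) * ‖θ₁ - θ₂‖ +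
          (Real.exp 2 * M + g * M) * (B * U * L ^ 2 * ‖θ₁ - θ₂‖) := by
        gcongr
    _ = (4 * θ₀.2.2⁻¹ + 4 + (Real.exp 2 + g) * B) * (M * (L ^ 2 * U)) * ‖θ₁ - θ₂‖ := by ring

end Lipschitz

/-- **Lipschitz condition for the GEV log-likelihood** at `θ₀ = (γ₀, μ₀, σ₀)` with
`γ₀ > −1/2`, `σ₀ > 0`, relative to the parameter set `Θ = (−1/2, ∞) × ℝ × (0, ∞)`:
there are a measurable `ℓ̇ ≥ 0` with `∫ ℓ̇² dP_{θ₀} < ∞` and `ε₀ > 0` such that for all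
`0 < ε < ε₀`, `|ℓ_{θ₁}(x) − ℓ_{θ₂}(x)| ≤ ℓ̇(x) ‖θ₁ − θ₂‖` whenever `x ∈ S̄(2ε)` (`x` lies in
the support of every `θ ∈ Θ` with `‖θ − θ₀‖ < 2ε`) and `θ₁, θ₂ ∈ Θ` with
`‖θ_j − θ₀‖ < ε`. -/
theorem gev_lipschitz_condition (θ₀ : ℝ × ℝ × ℝ) (hγ : -(1/2) < θ₀.1) (hσ : 0 < θ₀.2.2) :
    ∃ (ℓdot : ℝ → ℝ) (ε₀ : ℝ),
      Measurable ℓdot ∧ (∀ x, 0 ≤ ℓdot x) ∧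
      (∫⁻ x, ENNReal.ofReal (ℓdot x ^ 2) ∂(gevMeasure θ₀)) < ⊤ ∧
      0 < ε₀ ∧
      ∀ ε : ℝ, 0 < ε → ε < ε₀ → ∀ x : ℝ,
        (∀ θ : ℝ × ℝ × ℝ, -(1/2) < θ.1 → 0 < θ.2.2 → ‖θ - θ₀‖ < 2 * ε →
          0 < θ.2.2 + θ.1 * (x - θ.2.1)) →
        ∀ θ₁ θ₂ : ℝ × ℝ × ℝ,
          -(1/2) < θ₁.1 → 0 < θ₁.2.2 → ‖θ₁ - θ₀‖ < ε →
          -(1/2) < θ₂.1 → 0 < θ₂.2.2 → ‖θ₂ - θ₀‖ < ε →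
          |gevLogDensity θ₁ x - gevLogDensity θ₂ x| ≤ ℓdot x * ‖θ₁ - θ₂‖ := by
  obtain ⟨C, hC⟩ := exists_abs_gevLogDensity_sub_le hσ
  have hmeas : Measurable fun x => C * gevEnvelope θ₀.1 (gevTransform θ₀ x) :=
    ((measurable_gevEnvelope θ₀.1).comp (measurable_gevTransform θ₀)).const_mul C
  -- The absolute value is for `x` outside the support of `θ₀`, where the envelope may be negative.
  refine ⟨fun x => |C * gevEnvelope θ₀.1 (gevTransform θ₀ x)|,
    min (1 / 2) (min (θ₀.2.2 / 2) ((θ₀.1 + 1 / 2) / 2)), hmeas.abs, fun x => abs_nonneg _,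
    ?_, ?_, ?_⟩
  · simpa only [sq_abs] using lintegral_sq_gevEnvelope_lt_top hγ hσ C
  · exact lt_min (by norm_num) (lt_min (by linarith) (by linarith))
  intro ε hε hεε₀ x hx θ₁ θ₂ _ _ hθ₁ _ _ hθ₂
  obtain ⟨hε_half, hεσ, hεγ⟩ : ε < 1 / 2 ∧ ε < θ₀.2.2 / 2 ∧ ε < (θ₀.1 + 1 / 2) / 2 := by
    simpa only [lt_min_iff] using hεε₀
  have hsupport : ∀ θ ∈ Metric.ball θ₀ (2 * ε), 0 < gevMargin θ x := by
    intro θ hθ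
    rw [mem_ball_iff_norm] at hθ
    exact hx θ (by linarith [neg_le_of_abs_le (abs_shape_sub_le θ θ₀)])
      (by linarith [neg_le_of_abs_le (abs_scale_sub_le θ θ₀)]) hθ
  have hnear {θ : ℝ × ℝ × ℝ} (hθ : ‖θ - θ₀‖ < ε) : GevNear θ₀ x θ :=
    gevNear_of_mem_ball hε hε_half.le (by linarith) hsupport (mem_ball_iff_norm.2 hθ)
  have hw : 0 < gevMargin θ₀ x := hsupport θ₀ (Metric.mem_ball_self (by positivity))
  refine (hC hw (hnear hθ₁) (hnear hθ₂)).trans ?_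
  gcongr
  exact le_abs_self _
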